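/- Let L be a complete orthomodular lattice and let z ∈ L satisfy ⊥ < z < ⊤. Then the following are equivalent: (a) for all x, y ∈ L there exists u ∈ L such that δ_B(u) = δ_B(x) ⊓ δ_B(y) for every nontrivial complete atomic Boolean subalgebra B of L; (b) every element of L equals ⊥, z, zᗮ, or ⊤. -/

import Mathlib

/-- The daseinisation of `x` to a subset `B` of a complete lattice:
`δ_B(x) := sInf {y ∈ B | x ≤ y}`. -/
def das {L : Type*} [CompleteLattice L] (B : Set L) (x : L) : L :=
  sInf {y ∈ B | x ≤ y}

/-- `a` is an atom of the subset `C`: `a ∈ C`, `a ≠ ⊥`, and every element of `C`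
strictly below `a` is `⊥`. -/
def IsAtomOf {L : Type*} [CompleteLattice L] (C : Set L) (a : L) : Prop :=
  a ∈ C ∧ a ≠ ⊥ ∧ ∀ y ∈ C, y < a → y = ⊥

/-- `B` is a nontrivial complete atomic Boolean subalgebra of `L` (with respect to
the orthocomplementation `oc`). -/
def IsCABS {L : Type*} [CompleteLattice L] (oc : L → L) (B : Set L) : Prop :=
  (∀ S ⊆ B, sInf S ∈ B) ∧ (∀ S ⊆ B, sSup S ∈ B) ∧
  (∀ b ∈ B, oc b ∈ B) ∧
  (∀ p ∈ B, ∀ q ∈ B, ∀ r ∈ B,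
    p ⊓ (q ⊔ r) = (p ⊓ q) ⊔ (p ⊓ r) ∧ p ⊔ (q ⊓ r) = (p ⊔ q) ⊓ (p ⊔ r)) ∧
  (∀ b ∈ B, b = sSup {a | IsAtomOf B a ∧ a ≤ b}) ∧
  (∃ b ∈ B, b ≠ ⊥ ∧ b ≠ ⊤)

theorem das_of_mem {L : Type*} [CompleteLattice L] {B : Set L} {x : L} (hx : x ∈ B) :
    das B x = x :=
  le_antisymm (sInf_le ⟨hx, le_rfl⟩) (le_sInf fun _ h => h.2)

theorem four_isCABS {L : Type*} [CompleteLattice L] (oc : L → L)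
    (h_inf : ∀ x : L, x ⊓ oc x = ⊥) (h_sup : ∀ x : L, x ⊔ oc x = ⊤)
    (h_inv : ∀ x : L, oc (oc x) = x) (hb : oc ⊥ = ⊤) (ht : oc ⊤ = ⊥)
    (w : L) (h1 : w ≠ ⊥) (h2 : w ≠ ⊤) :
    IsCABS oc ({⊥, w, oc w, ⊤} : Set L) := by
  have i1 := h_inf w
  have i2 : oc w ⊓ w = ⊥ := by rw [inf_comm]; exact i1
  have s1 := h_sup w
  have s2 : oc w ⊔ w = ⊤ := by rw [sup_comm]; exact s1
  have h3 : oc w ≠ ⊥ := fun h => h2 (by rw [← h_inv w, h, hb])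
  have fin : ({⊥, w, oc w, ⊤} : Set L).Finite := by simp
  have mi : ∀ a ∈ ({⊥, w, oc w, ⊤} : Set L), ∀ b ∈ ({⊥, w, oc w, ⊤} : Set L),
      a ⊓ b ∈ ({⊥, w, oc w, ⊤} : Set L) := by
    rintro a (rfl | rfl | rfl | rfl) b (rfl | rfl | rfl | rfl) <;> simp [i1, i2]
  have ms : ∀ a ∈ ({⊥, w, oc w, ⊤} : Set L), ∀ b ∈ ({⊥, w, oc w, ⊤} : Set L),
      a ⊔ b ∈ ({⊥, w, oc w, ⊤} : Set L) := by
    rintro a (rfl | rfl | rfl | rfl) b (rfl | rfl | rfl | rfl) <;> simp [s1, s2]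
  have aw : IsAtomOf ({⊥, w, oc w, ⊤} : Set L) w := by
    refine ⟨by simp, h1, ?_⟩
    rintro y (rfl | rfl | rfl | rfl) hy
    · rfl
    · exact absurd hy (lt_irrefl _)
    · rw [← i2]; exact (inf_eq_left.2 hy.le).symm
    · exact absurd hy not_top_lt
  have awc : IsAtomOf ({⊥, w, oc w, ⊤} : Set L) (oc w) := by
    refine ⟨by simp, h3, ?_⟩
    rintro y (rfl | rfl | rfl | rfl) hy
    · rfl
    · rw [← i1]; exact (inf_eq_left.2 hy.le).symm
    · exact absurd hy (lt_irrefl _)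
    · exact absurd hy not_top_lt
  refine ⟨?_, ?_, ?_, ?_, ?_, w, by simp, h1, h2⟩
  · intro S hS
    have hf := fin.subset hS
    induction S, hf using Set.Finite.induction_on with
    | empty => simp
    | insert _ _ ih =>
      rw [sInf_insert]
      exact mi _ (hS (Set.mem_insert _ _)) _ (ih ((Set.subset_insert _ _).trans hS))
  · intro S hS
    have hf := fin.subset hS
    induction S, hf using Set.Finite.induction_on with
    | empty => simp
    | insert _ _ ih =>
      rw [sSup_insert]
      exact ms _ (hS (Set.mem_insert _ _)) _ (ih ((Set.subset_insert _ _).trans hS))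
  · rintro b (rfl | rfl | rfl | rfl) <;> simp [hb, ht, h_inv]
  · rintro p (rfl | rfl | rfl | rfl) q (rfl | rfl | rfl | rfl) r (rfl | rfl | rfl | rfl) <;>
      simp [i1, i2, s1, s2]
  · intro b hbm
    refine le_antisymm ?_ (sSup_le fun a h => h.2)
    rcases hbm with rfl | rfl | rfl | rfl
    · exact bot_le
    · exact le_sSup ⟨aw, le_rfl⟩
    · exact le_sSup ⟨awc, le_rfl⟩
    · conv_lhs => rw [← s1]
      exact sup_le (le_sSup ⟨aw, le_top⟩) (le_sSup ⟨awc, le_top⟩)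

/-- Every meet of two daseinised elements is itself the daseinisation of some
element (uniformly over all nontrivial complete atomic Boolean subalgebras) iff
`L = {⊥, z, zᗮ, ⊤}`. -/
theorem das_inf_representable_iff {L : Type*} [CompleteLattice L] (oc : L → L)
    (h_inf : ∀ x : L, x ⊓ oc x = ⊥) (h_sup : ∀ x : L, x ⊔ oc x = ⊤)
    (h_anti : ∀ x y : L, x ≤ y → oc y ≤ oc x) (h_inv : ∀ x : L, oc (oc x) = x)
    (h_om : ∀ x y : L, x ≤ y → y = x ⊔ (y ⊓ oc x))
    (z : L) (hz1 : ⊥ < z) (hz2 : z < ⊤) :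
    (∀ x y : L, ∃ u : L, ∀ B : Set L, IsCABS oc B → das B u = das B x ⊓ das B y) ↔
    (∀ w : L, w = ⊥ ∨ w = z ∨ w = oc z ∨ w = ⊤) := by
  have hb : oc ⊥ = ⊤ := by simpa using h_sup ⊥
  have ht : oc ⊤ = ⊥ := by simpa using h_inf ⊤
  constructor
  · intro H
    have four := four_isCABS oc h_inf h_sup h_inv hb ht
    have key : ∀ x y w : L, x ≠ ⊥ → x ≠ ⊤ → y ≠ ⊥ → y ≠ ⊤ → w ≠ ⊥ → w ≠ ⊤ → x ⊓ y = ⊥ →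
        das {⊥, w, oc w, ⊤} x ⊓ das {⊥, w, oc w, ⊤} y = ⊥ := by
      intro x y w hx1 hx2 hy1 hy2 hw1 hw2 hxy
      obtain ⟨u, hu⟩ := H x y
      have le_das : ∀ B : Set L, u ≤ das B u := fun B => le_sInf fun _ h => h.2
      have ux : u ≤ x := by
        have h := hu _ (four x hx1 hx2)
        have hself : das {⊥, x, oc x, ⊤} x = x := das_of_mem (by simp)
        exact (le_das _).trans (h.le.trans (inf_le_left.trans hself.le))
      have uy : u ≤ y := by
        have h := hu _ (four y hy1 hy2)
        have hself : das {⊥, y, oc y, ⊤} y = y := das_of_mem (by simp)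
        exact (le_das _).trans (h.le.trans (inf_le_right.trans hself.le))
      have u0 : u = ⊥ := le_bot_iff.1 (hxy ▸ le_inf ux uy)
      rw [← hu _ (four w hw1 hw2), u0]
      exact das_of_mem (by simp)
    -- nontrivial elements form an antichain
    have anti : ∀ x w : L, x ≠ ⊥ → w ≠ ⊤ → x ≤ w → x = w := by
      intro x w hx hw hxw
      by_contra hne
      have hw0 : w ≠ ⊥ := fun h => hx (le_bot_iff.1 (h ▸ hxw))
      have hxt : x ≠ ⊤ := fun h => hw (top_le_iff.1 (h ▸ hxw))
      have hy : w ⊓ oc x ≠ ⊥ := fun h => hne (by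
        have := h_om x w hxw
        rw [h, sup_bot_eq] at this
        exact this.symm)
      have hyt : w ⊓ oc x ≠ ⊤ := fun h => hw (top_le_iff.1 (h ▸ inf_le_left))
      have hxy : x ⊓ (w ⊓ oc x) = ⊥ := by
        rw [inf_left_comm, h_inf, inf_bot_eq]
      have hk := key x _ w hx hxt hy hyt hw0 hw hxy
      have ge : ∀ v : L, v ≠ ⊥ → v ≤ w → w ≤ das {⊥, w, oc w, ⊤} v := by
        intro v hv hvw
        refine le_sInf ?_
        rintro t ⟨rfl | rfl | rfl | rfl, hvt⟩
        · exact absurd (le_bot_iff.1 hvt) hv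
        · exact le_rfl
        · exact absurd (le_bot_iff.1 (h_inf w ▸ le_inf hvw hvt)) hv
        · exact le_top
      exact hw0 (le_bot_iff.1 (hk ▸ le_inf (ge x hx hxw) (ge _ hy inf_le_left)))
    intro w
    by_contra hcon
    push Not at hcon
    obtain ⟨w0, wz, hwzc, wt⟩ := hcon
    have hzc_bot : oc z ≠ ⊥ := fun h => hz2.ne (by rw [← h_inv z, h, hb])
    have hzc_top : oc z ≠ ⊤ := fun h => hz1.ne' (by rw [← h_inv z, h, ht])
    have hwc_top : oc w ≠ ⊤ := fun h => w0 (by rw [← h_inv w, h, ht])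
    have hk := key z (oc z) w hz1.ne' hz2.ne hzc_bot hzc_top w0 wt (h_inf z)
    have ge : ∀ v : L, v ≠ ⊥ → v ≠ w → v ≠ oc w → ⊤ ≤ das {⊥, w, oc w, ⊤} v := by
      intro v hv hvw hvwc
      refine le_sInf ?_
      rintro t ⟨rfl | rfl | rfl | rfl, hvt⟩
      · exact absurd (le_bot_iff.1 hvt) hv
      · exact absurd (anti _ _ hv wt hvt) hvw
      · exact absurd (anti _ _ hv hwc_top hvt) hvwc
      · exact le_rfl
    have g1 := ge z hz1.ne' wz.symm (fun h => hwzc (by rw [h, h_inv]))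
    have g2 := ge (oc z) hzc_bot hwzc.symm (fun h => wz (by rw [← h_inv z, h, h_inv]))
    have : (⊤ : L) ≤ ⊥ := hk ▸ le_inf g1 g2
    exact wt (top_le_iff.1 (this.trans bot_le))
  · intro H x y
    refine ⟨x ⊓ y, fun B hB => ?_⟩
    obtain ⟨hI, hS, hO, -, -, b, hbB, hb0, hbt⟩ := hB
    have hz : z ∈ B := by
      rcases H b with h | h | h | h
      · exact absurd h hb0
      · exact h ▸ hbB
      · have := hO b hbB
        rwa [h, h_inv] at this
      · exact absurd h hbt
    have all : ∀ v : L, v ∈ B := by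
      intro v
      rcases H v with h | h | h | h
      · rw [h, ← sSup_empty]; exact hS _ (Set.empty_subset _)
      · exact h ▸ hz
      · exact h ▸ hO z hz
      · rw [h, ← sInf_empty]; exact hI _ (Set.empty_subset _)
    rw [das_of_mem (all _), das_of_mem (all _), das_of_mem (all _)]
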